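/- arXiv:1010.5210 — 5 statements merged into one kernel-verified Lean document; each statement's English description precedes it below -/
import Mathlib

section
/- For all integers r ≥ 1, k with 1 ≤ k ≤ r, and d ≥ 2, the rational number f_{r,k}(d) := (1/k)·(C(r+d, r) − C(r−k+d, r−k)) − (1/(r+1))·C(r+d, r) is strictly positive, and moreover f_{r,k}(d+1) > f_{r,k}(d) for every integer d ≥ 2; that is, f_{r,k} is positive and strictly increasing on integers d ≥ 2. -/
/-!
Put `m = r - k`. Multiplying `f_{r,k}(d)` by `k (r + 1) > 0` gives
`F(d) = (m + 1) C(r+d, r) - (r + 1) C(m+d, m)`. Since `(d + 1) C(n+d+1, n) = (n + d + 1) C(n+d, n)`,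
`(d + 1) (F(d+1) - F(d)) = r F(d) + (r - m) (r + 1) C(m+d, m)`,
so `F(d) ≥ 0` forces `F(d+1) > F(d)`. As `F(1) = 0`, induction makes `F` strictly increasing
from `d = 1` on, and hence positive for `d ≥ 2`.
-/

lemma choose_step (n d : ℕ) :
    ((d : ℚ) + 1) * ((n + (d + 1)).choose n : ℚ) = (n + d + 1) * ((n + d).choose n : ℚ) := by
  have h := Nat.choose_mul_succ_eq (n + d) n
  rw [show n + d + 1 - n = d + 1 by omega] at h
  have h' : (((n + d).choose n : ℕ) : ℚ) * (n + d + 1)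
      = ((n + (d + 1)).choose n : ℚ) * (d + 1) := by exact_mod_cast h
  linarith

/-- The function `F(d) = k (r + 1) f_{r,k}(d)`, written in terms of `r` and `m = r - k`. -/
def scaledF (r m d : ℕ) : ℚ :=
  ((m : ℚ) + 1) * ((r + d).choose r : ℚ) - ((r : ℚ) + 1) * ((m + d).choose m : ℚ)

lemma scaledF_lt_succ {r m d : ℕ} (hm : m < r) (h : 0 ≤ scaledF r m d) :
    scaledF r m d < scaledF r m (d + 1) := by
  have key : ((d : ℚ) + 1) * (scaledF r m (d + 1) - scaledF r m d)
      = r * scaledF r m d + ((r : ℚ) - m) * (r + 1) * ((m + d).choose m : ℚ) := by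
    unfold scaledF
    linear_combination ((m : ℚ) + 1) * choose_step r d - ((r : ℚ) + 1) * choose_step m d
  have hB : (0 : ℚ) < ((m + d).choose m : ℚ) := by
    exact_mod_cast Nat.choose_pos (Nat.le_add_right m d)
  have hrm : (0 : ℚ) < (r : ℚ) - m := sub_pos.mpr (by exact_mod_cast hm)
  have hpos : 0 < ((d : ℚ) + 1) * (scaledF r m (d + 1) - scaledF r m d) := by
    rw [key]
    positivity
  exact sub_pos.mp (pos_of_mul_pos_right hpos (by positivity))

lemma scaledF_nonneg {r m : ℕ} (hm : m < r) {d : ℕ} (hd : 1 ≤ d) : 0 ≤ scaledF r m d := by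
  induction d, hd using Nat.le_induction with
  | base =>
    simp only [scaledF, Nat.choose_succ_self_right]
    push_cast
    exact le_of_eq (by ring)
  | succ d _ ih => exact ih.trans (scaledF_lt_succ hm ih).le

/-- For integers `r ≥ k ≥ 1` and `d ≥ 2`, the rational number
`f_{r,k}(d) = (1/k)·(C(r+d, r) − C(r−k+d, r−k)) − (1/(r+1))·C(r+d, r)`
is strictly positive, and `f_{r,k}(d+1) > f_{r,k}(d)`; i.e. `f_{r,k}` is positive and
strictly increasing on integers `d ≥ 2`. -/
theorem stmt1 (r k : ℕ) (hk : 1 ≤ k) (hkr : k ≤ r) :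
    ∀ d : ℕ, 2 ≤ d →
      (0 < (1 / (k : ℚ)) * (((r + d).choose r : ℚ) - ((r - k + d).choose (r - k) : ℚ))
            - (1 / ((r : ℚ) + 1)) * ((r + d).choose r : ℚ)) ∧
      ((1 / (k : ℚ)) * (((r + d).choose r : ℚ) - ((r - k + d).choose (r - k) : ℚ))
            - (1 / ((r : ℚ) + 1)) * ((r + d).choose r : ℚ)
        < (1 / (k : ℚ)) * (((r + (d + 1)).choose r : ℚ)
              - ((r - k + (d + 1)).choose (r - k) : ℚ))
            - (1 / ((r : ℚ) + 1)) * ((r + (d + 1)).choose r : ℚ)) := by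
  intro d hd
  obtain ⟨m, rfl⟩ := Nat.exists_eq_add_of_le hkr
  have hm : m < k + m := by omega
  have hk0 : (0 : ℚ) < k := by exact_mod_cast hk
  have hc : (0 : ℚ) < k * (((k + m : ℕ) : ℚ) + 1) := by positivity
  have hf : ∀ e : ℕ, (1 / (k : ℚ)) * (((k + m + e).choose (k + m) : ℚ)
        - ((k + m - k + e).choose (k + m - k) : ℚ))
      - (1 / (((k + m : ℕ) : ℚ) + 1)) * ((k + m + e).choose (k + m) : ℚ)
      = scaledF (k + m) m e / (k * (((k + m : ℕ) : ℚ) + 1)) := by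
    intro e
    rw [Nat.add_sub_cancel_left, scaledF]
    have h1 : ((k + m : ℕ) : ℚ) + 1 ≠ 0 := by positivity
    field_simp
    push_cast
    ring
  rw [hf d, hf (d + 1)]
  refine ⟨div_pos ?_ hc, div_lt_div_of_pos_right ?_ hc⟩
  · obtain ⟨e, rfl⟩ : ∃ e, d = e + 1 := ⟨d - 1, by omega⟩
    have h := scaledF_nonneg hm (d := e) (by omega)
    exact h.trans_lt (scaledF_lt_succ hm h)
  · exact scaledF_lt_succ hm (scaledF_nonneg hm (by omega))
end

section
/- Let d = (d_1, …, d_s) be a finite sequence of integers with d_i ≥ 2 for all i, and let n, r ≥ 1 be integers such that δ(n, d, r) = 2 and n − 2r − s = 1. Then the triple (n, r, {d_1,…,d_s}), with the degrees taken as an unordered multiset, is one of the following three: (4, 1, {3}); (6, 2, {3}); (5, 1, {2,2}). -/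
/-!
Substituting `n - r = r + 1 + s`, the hypothesis `δ = 2` says that
`∑ C(d_i + r, r) = (r + 1) (r + 1 + s) - 2`. Each term is at least `C(r + 2, 2)` because
`d_i ≥ 2`; summing, `s ≥ 3` would force `r (r - 1) + 2 ≤ 0`, and `s = 0` is impossible as
`(r + 1)² ≠ 2`. For `s = 1` and `s = 2` the cubic and quartic lower bounds
`C(r + 3, 3)` and `C(r + 4, 4)` for degrees `≥ 3` and `≥ 4` leave only the listed cases.
-/

lemma two_mul_choose_two (r : ℕ) : 2 * (2 + r).choose r = (r + 1) * (r + 2) := by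
  rw [← Nat.choose_symm_add]
  induction r with
  | zero => rfl
  | succ k ih =>
    rw [← Nat.add_assoc, Nat.choose_succ_succ' (2 + k) 1, Nat.choose_one_right]
    linarith

lemma six_mul_choose_three (r : ℕ) :
    6 * (3 + r).choose r = (r + 1) * (r + 2) * (r + 3) := by
  rw [← Nat.choose_symm_add]
  induction r with
  | zero => rfl
  | succ k ih =>
    have h := two_mul_choose_two (k + 1)
    rw [← Nat.choose_symm_add, show 2 + (k + 1) = 3 + k by ring] at h
    rw [← Nat.add_assoc, Nat.choose_succ_succ' (3 + k) 2]
    linarith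

lemma twentyfour_mul_choose_four (r : ℕ) :
    24 * (4 + r).choose r = (r + 1) * (r + 2) * (r + 3) * (r + 4) := by
  rw [← Nat.choose_symm_add]
  induction r with
  | zero => rfl
  | succ k ih =>
    have h := six_mul_choose_three (k + 1)
    rw [← Nat.choose_symm_add, show 3 + (k + 1) = 4 + k by ring] at h
    rw [← Nat.add_assoc, Nat.choose_succ_succ' (4 + k) 3]
    linarith

lemma choose_add_mono {a b : ℕ} (r : ℕ) (h : a ≤ b) :
    (a + r).choose r ≤ (b + r).choose r :=
  Nat.choose_le_choose r (by omega)

/-- The case of a single degree: `δ = 2` reads `C(a + r, r) = r² + 3 r`. -/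
lemma single_degree {a r : ℕ} (hr : 1 ≤ r) (ha : 2 ≤ a)
    (h : (a + r).choose r = r ^ 2 + 3 * r) : a = 3 ∧ (r = 1 ∨ r = 2) := by
  have h3 := six_mul_choose_three r
  obtain rfl | rfl | h4 : a = 2 ∨ a = 3 ∨ 4 ≤ a := by omega
  · have := two_mul_choose_two r
    nlinarith
  · refine ⟨rfl, ?_⟩
    rw [h] at h3
    have hlt : r < 3 := by
      by_contra! hc
      obtain ⟨k, rfl⟩ := Nat.exists_eq_add_of_le hc
      ring_nf at h3
      nlinarith
    omega
  · exfalso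
    have h5 := choose_add_mono r h4
    have h6 := twentyfour_mul_choose_four r
    rw [h] at h5
    obtain ⟨k, rfl⟩ := Nat.exists_eq_add_of_le hr
    ring_nf at h5 h6
    nlinarith

/-- For two degrees, a degree `≥ 3` makes the sum of binomials too large. -/
lemma two_degrees {a b r : ℕ} (hr : 1 ≤ r) (ha : 2 ≤ a) (hb : 2 ≤ b)
    (h : (a + r).choose r + (b + r).choose r + 2 = (r + 1) * (r + 3)) :
    a = 2 ∧ r = 1 := by
  have h2 := two_mul_choose_two r
  have hb' := choose_add_mono r hb
  obtain rfl | h3 : a = 2 ∨ 3 ≤ a := by omega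
  · refine ⟨rfl, ?_⟩
    obtain rfl | h3 : b = 2 ∨ 3 ≤ b := by omega
    · nlinarith
    · have h5 := choose_add_mono r h3
      have h6 := six_mul_choose_three r
      obtain ⟨k, rfl⟩ := Nat.exists_eq_add_of_le hr
      ring_nf at h h2 h5 h6
      nlinarith
  · exfalso
    have h5 := choose_add_mono r h3
    have h6 := six_mul_choose_three r
    obtain ⟨k, rfl⟩ := Nat.exists_eq_add_of_le hr
    ring_nf at h h2 h5 h6 hb'
    nlinarith

/-- Let `d = (d_1, …, d_s)` be degrees `≥ 2` and `n, r ≥ 1` with `δ(n, d, r) = 2` and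
`n − 2r − s = 1`. Then `(n, r, {d_1,…,d_s})` (degrees as a multiset) is one of
`(4, 1, {3})`, `(6, 2, {3})`, `(5, 1, {2,2})`. -/
theorem stmt3 (s : ℕ) (d : Fin s → ℕ) (hd : ∀ i, 2 ≤ d i)
    (n r : ℕ) (hn : 1 ≤ n) (hr : 1 ≤ r)
    (hδ : ((r : ℤ) + 1) * ((n : ℤ) - (r : ℤ)) - ∑ i, ((d i + r).choose r : ℤ) = 2)
    (hδm : (n : ℤ) - 2 * (r : ℤ) - (s : ℤ) = 1) :
    (n = 4 ∧ r = 1 ∧ (↑(List.ofFn d) : Multiset ℕ) = {3}) ∨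
    (n = 6 ∧ r = 2 ∧ (↑(List.ofFn d) : Multiset ℕ) = {3}) ∨
    (n = 5 ∧ r = 1 ∧ (↑(List.ofFn d) : Multiset ℕ) = {2, 2}) := by
  obtain rfl : n = 2 * r + s + 1 := by omega
  have hsum : ∑ i, (d i + r).choose r + 2 = (r + 1) * (r + s + 1) := by
    zify
    push_cast at hδ
    linarith
  match s, d, hd, hsum with
  | 0, d, _, hsum =>
    simp only [Finset.univ_eq_empty, Finset.sum_empty] at hsum
    nlinarith
  | 1, d, hd, hsum =>
    rw [Fin.sum_univ_one] at hsum
    obtain ⟨h, rfl | rfl⟩ := single_degree hr (hd 0) (by linarith)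
    · exact Or.inl ⟨rfl, rfl, by simp [h]⟩
    · exact Or.inr (Or.inl ⟨rfl, rfl, by simp [h]⟩)
  | 2, d, hd, hsum =>
    rw [Fin.sum_univ_two] at hsum
    obtain ⟨h0, h⟩ := two_degrees hr (hd 0) (hd 1) (by linarith)
    obtain ⟨h1, -⟩ := two_degrees hr (hd 1) (hd 0) (by linarith)
    subst h
    exact Or.inr (Or.inr ⟨rfl, rfl, by simp [List.ofFn_succ, h0, h1]; rfl⟩)
  | s + 3, d, hd, hsum =>
    exfalso
    have hle : (s + 3) * (2 + r).choose r ≤ ∑ i, (d i + r).choose r := by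
      simpa using Finset.card_nsmul_le_sum Finset.univ (fun i => (d i + r).choose r) _
        (fun i _ => choose_add_mono r (hd i))
    have h2 := two_mul_choose_two r
    have h3 : (s + 3) * ((r + 1) * (r + 2)) + 4 ≤ 2 * ((r + 1) * (r + (s + 3) + 1)) := by
      rw [← h2]
      linarith
    obtain ⟨k, rfl⟩ := Nat.exists_eq_add_of_le hr
    ring_nf at h3
    nlinarith [Nat.zero_le (s * k), Nat.zero_le (s * k ^ 2)]
end

section
/- For every integer d ≥ 2, the coefficients of the polynomial M_d satisfy the symmetry α_i = α_{m−i} for all integers i with 0 ≤ i ≤ m, where m = d(d−1)/2. -/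
/-!
The involution `(i, j) ↦ (d - j, d - i)` on pairs `1 ≤ i ≤ j ≤ d - 1` sends the factor
`i X + (d - j)` to `(d - j) X + i`, which is its reversal. Since reversal is multiplicative over a
domain, the whole product is equal to its own reversal, i.e. palindromic of degree equal to the
number of factors, `1 + 2 + ⋯ + (d - 1) = d (d - 1) / 2`.
-/

open Polynomial in
lemma reverse_linear (a b : ℤ) (ha : a ≠ 0) :
    (C a * X + C b).reverse = C b * X + C a := by
  have h1 : reflect 1 (C a * X) = C a := by
    simpa [revAt_le] using reflect_C_mul_X_pow 1 1 (c := a)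
  rw [reverse, natDegree_linear ha, reflect_add, reflect_C, h1, pow_one, add_comm]

open Polynomial in
lemma reverse_prod {ι : Type*} (s : Finset ι) (f : ι → ℤ[X]) :
    (∏ k ∈ s, f k).reverse = ∏ k ∈ s, (f k).reverse := by
  classical
  induction s using Finset.induction_on with
  | empty => simpa using reverse_C (1 : ℤ)
  | insert a s ha ih => rw [Finset.prod_insert ha, Finset.prod_insert ha,
      reverse_mul_of_domain, ih]

open Polynomial in
/-- For `d ≥ 2`, write `M_d(x, y) = ∏_{1 ≤ i ≤ j ≤ d−1} (i·x + (d−j)·y) = Σᵢ αᵢ xⁱ y^{m−i}`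
with `m = d(d−1)/2`; since `M_d` is homogeneous of degree `m`, the `αᵢ` are the
coefficients of the one-variable polynomial `∏_{1 ≤ i ≤ j ≤ d−1} (i·X + (d−j))`.
Then `αᵢ = α_{m−i}` for all `0 ≤ i ≤ m`. -/
theorem stmt5 (d : ℕ) (hd : 2 ≤ d) :
    ∀ i : ℕ, i ≤ d * (d - 1) / 2 →
      (∏ j ∈ Finset.Icc 1 (d - 1), ∏ i ∈ Finset.Icc 1 j,
          (C (i : ℤ) * X + C ((d - j : ℕ) : ℤ))).coeff i =
        (∏ j ∈ Finset.Icc 1 (d - 1), ∏ i ∈ Finset.Icc 1 j,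
          (C (i : ℤ) * X + C ((d - j : ℕ) : ℤ))).coeff (d * (d - 1) / 2 - i) := by
  intro n hn
  rw [Finset.prod_sigma']
  set s := (Finset.Icc 1 (d - 1)).sigma fun j => Finset.Icc 1 j with hs
  set P : ℤ[X] := ∏ k ∈ s, (C (k.2 : ℤ) * X + C ((d - k.1 : ℕ) : ℤ)) with hP
  have hmem : ∀ k ∈ s, 1 ≤ k.2 ∧ k.2 ≤ k.1 ∧ k.1 < d := by
    intro k hk
    simp only [hs, Finset.mem_sigma, Finset.mem_Icc] at hk
    omega
  have hrev : P.reverse = P := by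
    rw [hP, reverse_prod]
    refine Finset.prod_bij' (fun k _ => ⟨d - k.2, d - k.1⟩) (fun k _ => ⟨d - k.2, d - k.1⟩)
      ?_ ?_ ?_ ?_ ?_
    · intro k hk
      have := hmem k hk
      simp only [hs, Finset.mem_sigma, Finset.mem_Icc]
      omega
    · intro k hk
      have := hmem k hk
      simp only [hs, Finset.mem_sigma, Finset.mem_Icc]
      omega
    · rintro ⟨a, b⟩ hk
      have := hmem _ hk
      simp only at this
      have h1 : d - (d - a) = a := by omega
      have h2 : d - (d - b) = b := by omega
      simp [h1, h2]
    · rintro ⟨a, b⟩ hk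
      have := hmem _ hk
      simp only at this
      have h1 : d - (d - a) = a := by omega
      have h2 : d - (d - b) = b := by omega
      simp [h1, h2]
    · intro k hk
      have := hmem k hk
      rw [reverse_linear _ _ (by omega)]
      have h2 : d - (d - k.2) = k.2 := by omega
      simp only [h2]
  have hdeg : P.natDegree = d * (d - 1) / 2 := by
    rw [hP, natDegree_prod]
    · rw [Finset.sum_congr rfl (g := fun _ => 1)]
      · rw [← Finset.card_eq_sum_ones, hs, Finset.card_sigma, ← Finset.sum_range_id,
          Finset.range_eq_Ico, Finset.sum_eq_sum_Ico_succ_bot (by omega)]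
        simp only [Nat.card_Icc, Nat.add_sub_cancel, zero_add]
        refine Finset.sum_congr ?_ fun _ _ => rfl
        ext x
        simp only [Finset.mem_Icc, Finset.mem_Ico]
        omega
      · intro k hk
        have := hmem k hk
        exact natDegree_linear (by omega)
    · intro k hk h0
      have := hmem k hk
      have h1 := natDegree_linear (a := (k.2 : ℤ)) (b := ((d - k.1 : ℕ) : ℤ)) (by omega)
      rw [h0] at h1
      simp at h1
  rw [← hdeg] at hn ⊢
  conv_lhs => rw [← hrev]
  rw [coeff_reverse, revAt_le hn]
end

section
/- For every integer d ≥ 2, the coefficients of the polynomial M_d are strictly increasing up to the middle: α_{i−1} < α_i for every integer i with 1 ≤ i and 2i ≤ m, where m = d(d−1)/2. -/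
/-!
Put `a = i`, `b = d - j`: the polynomial is the product of `a X + b` over the set of pairs
`a, b ≥ 1` with `a + b ≤ d`, which is stable under swapping `a` and `b`. Such a product is built
from the constant `1` by multiplying by palindromic polynomials of two kinds: the diagonal factors
`a (X + 1)`, and the products `(a X + b) (b X + a) = ab X² + (a² + b²) X + ab` with `a ≠ b`, whose
middle coefficient is larger than the outer ones. Both operations preserve the property
`StrictPalindromic` of being palindromic and strictly increasing up to the middle
(`StrictPalindromic.diag`, `StrictPalindromic.pair`), so the result follows by induction on the
size of a swap-stable set of pairs (`strictPalindromic_prod`). Extending coefficient sequences by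
zero to all of `ℤ` removes the boundary cases.
-/

open Polynomial

/-- The coefficients of `P`, extended by zero to negative indices. -/
def intCoeff (P : ℤ[X]) (i : ℤ) : ℤ := if i < 0 then 0 else P.coeff i.toNat

lemma intCoeff_natCast (P : ℤ[X]) (n : ℕ) : intCoeff P n = P.coeff n := by
  simp [intCoeff]

lemma intCoeff_linear_mul (P : ℤ[X]) (a b i : ℤ) :
    intCoeff ((C a * X + C b) * P) i = a * intCoeff P (i - 1) + b * intCoeff P i := by
  rcases lt_or_ge i 0 with h | h
  · have h' : i - 1 < 0 := by omega
    simp [intCoeff, h, h']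
  · obtain ⟨n, rfl⟩ := Int.eq_ofNat_of_zero_le h
    rw [add_mul, mul_assoc]
    cases n with
    | zero => simp [intCoeff]
    | succ n =>
      have : ((n + 1 : ℕ) : ℤ) - 1 = (n : ℕ) := by push_cast; ring
      rw [this, intCoeff_natCast, intCoeff_natCast, intCoeff_natCast]
      simp [coeff_X_mul]

/-- A sequence supported on nonnegative indices that is symmetric about `m / 2` and strictly
increasing from index `-1` up to the middle; in particular its value at `0` is positive. -/
structure StrictPalindromic (m : ℤ) (f : ℤ → ℤ) : Prop where
  neg : ∀ i < 0, f i = 0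
  symm : ∀ i, f (m - i) = f i
  lt : ∀ i, 0 ≤ i → 2 * i ≤ m → f (i - 1) < f i

lemma StrictPalindromic.le {m : ℤ} {f : ℤ → ℤ} (h : StrictPalindromic m f) (i : ℤ)
    (hi : 2 * i ≤ m) : f (i - 1) ≤ f i := by
  rcases lt_or_ge i 0 with h0 | h0
  · rw [h.neg _ h0, h.neg _ (by omega)]
  · exact (h.lt i h0 hi).le

lemma StrictPalindromic.congr {m m' : ℤ} {f g : ℤ → ℤ} (h : StrictPalindromic m f)
    (hm : m' = m) (hg : ∀ i, g i = f i) : StrictPalindromic m' g := by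
  obtain rfl : g = f := funext hg
  exact hm ▸ h

/-- Multiplication by `a (X + 1)`. -/
lemma StrictPalindromic.diag {m : ℤ} {f : ℤ → ℤ} (h : StrictPalindromic m f) (hm : 0 ≤ m)
    {a : ℤ} (ha : 0 < a) :
    StrictPalindromic (m + 1) (fun i => a * f (i - 1) + a * f i) where
  neg i hi := by simp [h.neg i hi, h.neg (i - 1) (by omega)]
  symm i := by
    have h1 : f (m + 1 - i) = f (i - 1) := by rw [← h.symm (i - 1)]; congr 1; ring
    have h2 : f (m + 1 - i - 1) = f i := by rw [← h.symm i]; congr 1; ring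
    simp only [h1, h2]; ring
  lt i h0 hi := by
    have key : f (i - 1 - 1) < f i := by
      rcases lt_or_ge m (2 * i) with hlt | hle
      · have h1 : f i = f (i - 1) := by rw [← h.symm i]; congr 1; omega
        have h2 := h.lt (i - 1) (by omega) (by omega)
        omega
      · have h1 := h.lt i h0 hle
        have h2 := h.le (i - 1) (by omega)
        omega
    have := mul_lt_mul_of_pos_left key ha
    linarith

/-- Multiplication by `u X² + v X + u` with `0 < u < v`. -/
lemma StrictPalindromic.pair {m : ℤ} {f : ℤ → ℤ} (h : StrictPalindromic m f) (hm : 0 ≤ m)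
    {u v : ℤ} (hu : 0 < u) (huv : u < v) :
    StrictPalindromic (m + 2) (fun i => u * f (i - 2) + v * f (i - 1) + u * f i) where
  neg i hi := by simp [h.neg i hi, h.neg (i - 1) (by omega), h.neg (i - 2) (by omega)]
  symm i := by
    have h1 : f (m + 2 - i) = f (i - 2) := by rw [← h.symm (i - 2)]; congr 1; ring
    have h2 : f (m + 2 - i - 1) = f (i - 1) := by rw [← h.symm (i - 1)]; congr 1; ring
    have h3 : f (m + 2 - i - 2) = f i := by rw [← h.symm i]; congr 1; ring
    simp only [h1, h2, h3]; ring
  lt i h0 hi := by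
    -- The increment of the product is `u * D (i - 2) + v * D (i - 1) + u * D i`, where
    -- `D k = f k - f (k - 1)`.
    have e1 : i - 1 - 1 = i - 2 := by ring
    have e2 : i - 1 - 2 = i - 3 := by ring
    have e3 : i - 2 - 1 = i - 3 := by ring
    simp only [e1, e2]
    have d2 := h.le (i - 2) (by omega)
    rw [e3] at d2
    have d1 := h.le (i - 1) (by omega)
    rw [e1] at d1
    have d2' : 0 ≤ u * (f (i - 2) - f (i - 3)) := mul_nonneg hu.le (by linarith)
    rcases lt_or_ge m (2 * i) with hlt | hle
    · have s1 := h.lt (i - 1) (by omega) (by omega)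
      rw [e1] at s1
      -- Past the middle, `D i` is `0` or `-D (i - 1)`, and `u < v` absorbs it.
      have d0 : f (i - 2) ≤ f i := by
        rcases eq_or_ne (2 * i) (m + 1) with he | he
        · have : f i = f (i - 1) := by rw [← h.symm i]; congr 1; omega
          omega
        · have : f i = f (i - 2) := by rw [← h.symm i]; congr 1; omega
          omega
      nlinarith [mul_pos (sub_pos.2 huv) (sub_pos.2 s1), mul_nonneg hu.le (sub_nonneg.2 d0)]
    · have s0 := h.lt i h0 hle
      nlinarith [mul_pos hu (sub_pos.2 s0), mul_nonneg (hu.trans huv).le (sub_nonneg.2 d1)]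

lemma strictPalindromic_one : StrictPalindromic 0 (intCoeff 1) where
  neg i hi := by simp [intCoeff, hi]
  symm i := by
    rcases lt_trichotomy i 0 with h | rfl | h
    · have h2 : (-i).toNat ≠ 0 := by omega
      simp [intCoeff, h, coeff_one, h2]
    · simp
    · have h2 : i.toNat ≠ 0 := by omega
      simp [intCoeff, h, coeff_one, h2]
  lt i h0 hi := by
    obtain rfl : i = 0 := by omega
    simp [intCoeff]

lemma strictPalindromic_prod (n : ℕ) : ∀ S : Finset (ℕ × ℕ), S.card = n →
    (∀ p ∈ S, 0 < p.1 ∧ 0 < p.2) → (∀ p ∈ S, p.swap ∈ S) →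
    StrictPalindromic n (intCoeff (∏ p ∈ S, (C (p.1 : ℤ) * X + C (p.2 : ℤ)))) := by
  induction n using Nat.strong_induction_on with
  | _ n ih =>
    intro S hn hpos hswap
    rcases S.eq_empty_or_nonempty with rfl | ⟨⟨a, b⟩, hp⟩
    · simp only [Finset.card_empty] at hn
      subst hn
      simpa using strictPalindromic_one
    · obtain ⟨ha, hb⟩ := hpos _ hp
      simp only at ha hb
      have hc := Finset.card_erase_add_one hp
      rcases eq_or_ne a b with rfl | hab
      · have := ih (S.erase (a, a)).card (by omega) (S.erase (a, a)) rfl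
          (fun p h => hpos p (Finset.mem_of_mem_erase h)) (by
            rintro ⟨x, y⟩ h
            simp only [Finset.mem_erase, ne_eq, Prod.mk.injEq, Prod.swap_prod_mk] at h ⊢
            exact ⟨fun e => h.1 ⟨e.2, e.1⟩, hswap _ h.2⟩)
        refine (this.diag (by positivity) (a := (a : ℤ)) (by exact_mod_cast ha)).congr
          (by omega) fun i => ?_
        rw [← Finset.mul_prod_erase S _ hp, intCoeff_linear_mul]
      · have hq : (b, a) ∈ S.erase (a, b) := by
          simp only [Finset.mem_erase, ne_eq, Prod.mk.injEq]
          exact ⟨fun e => hab e.2, hswap _ hp⟩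
        have hc' := Finset.card_erase_add_one hq
        have := ih ((S.erase (a, b)).erase (b, a)).card (by omega) _ rfl
          (fun p h => hpos p (Finset.mem_of_mem_erase (Finset.mem_of_mem_erase h))) (by
            rintro ⟨x, y⟩ h
            simp only [Finset.mem_erase, ne_eq, Prod.mk.injEq, Prod.swap_prod_mk] at h ⊢
            exact ⟨fun e => h.2.1 ⟨e.2, e.1⟩, fun e => h.1 ⟨e.2, e.1⟩, hswap _ h.2.2⟩)
        have ha' : (0 : ℤ) < a := by exact_mod_cast ha
        have hb' : (0 : ℤ) < b := by exact_mod_cast hb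
        have hne : (a : ℤ) - b ≠ 0 := by omega
        have huv : (a : ℤ) * b < a * a + b * b := by
          nlinarith [mul_pos ha' hb', mul_self_pos.2 hne]
        refine (this.pair (by positivity) (mul_pos ha' hb') huv).congr (by omega) fun i => ?_
        rw [← Finset.mul_prod_erase S _ hp, ← Finset.mul_prod_erase _ _ hq,
          intCoeff_linear_mul, intCoeff_linear_mul, intCoeff_linear_mul]
        have e : i - 1 - 1 = i - 2 := by ring
        rw [e]
        ring

/-- The pairs `(i, d - j)` with `1 ≤ i ≤ j ≤ d - 1`, i.e. the pairs of positive integers with sum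
at most `d`. -/
def triangle (d : ℕ) : Finset (ℕ × ℕ) :=
  (Finset.Icc 1 (d - 1) ×ˢ Finset.Icc 1 (d - 1)).filter fun p => p.1 + p.2 ≤ d

lemma mem_triangle {d : ℕ} {p : ℕ × ℕ} :
    p ∈ triangle d ↔ 0 < p.1 ∧ 0 < p.2 ∧ p.1 + p.2 ≤ d := by
  simp only [triangle, Finset.mem_filter, Finset.mem_product, Finset.mem_Icc]
  omega

@[to_additive]
lemma prod_triangle {M : Type*} [CommMonoid M] (d : ℕ) (F : ℕ → ℕ → M) :
    ∏ j ∈ Finset.Icc 1 (d - 1), ∏ i ∈ Finset.Icc 1 j, F i (d - j) =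
      ∏ p ∈ triangle d, F p.1 p.2 := by
  rw [Finset.prod_sigma']
  refine Finset.prod_bij' (fun s _ => (s.2, d - s.1)) (fun p _ => ⟨d - p.2, p.1⟩) ?_ ?_ ?_ ?_ ?_
  · rintro ⟨j, i⟩ h
    simp only [Finset.mem_sigma, Finset.mem_Icc, mem_triangle] at h ⊢
    omega
  · rintro ⟨a, b⟩ h
    simp only [Finset.mem_sigma, Finset.mem_Icc, mem_triangle] at h ⊢
    omega
  · rintro ⟨j, i⟩ h
    simp only [Finset.mem_sigma, Finset.mem_Icc] at h
    have : d - (d - j) = j := by omega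
    simp [this]
  · rintro ⟨a, b⟩ h
    simp only [mem_triangle] at h
    simp only [Prod.mk.injEq, true_and]
    omega
  · intro _ _
    rfl

lemma card_triangle {d : ℕ} (hd : 1 ≤ d) : (triangle d).card = d * (d - 1) / 2 := by
  rw [Finset.card_eq_sum_ones, ← sum_triangle d (fun _ _ => 1), ← Finset.sum_range_id]
  simp only [Finset.sum_const, Nat.card_Icc, smul_eq_mul, mul_one, Nat.add_sub_cancel]
  refine Finset.sum_subset (fun j h => ?_) fun j h h' => ?_
  · simp only [Finset.mem_Icc, Finset.mem_range] at h ⊢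
    omega
  · simp only [Finset.mem_Icc, Finset.mem_range] at h h'
    omega

open Polynomial in
/-- For `d ≥ 2`, write `M_d(x, y) = ∏_{1 ≤ i ≤ j ≤ d−1} (i·x + (d−j)·y) = Σᵢ αᵢ xⁱ y^{m−i}`
with `m = d(d−1)/2`; since `M_d` is homogeneous of degree `m`, the `αᵢ` are the
coefficients of the one-variable polynomial `∏_{1 ≤ i ≤ j ≤ d−1} (i·X + (d−j))`.
Then `α_{i−1} < αᵢ` for every `i ≥ 1` with `2i ≤ m`. -/
theorem stmt6 (d : ℕ) (hd : 2 ≤ d) :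
    ∀ i : ℕ, 1 ≤ i → 2 * i ≤ d * (d - 1) / 2 →
      (∏ j ∈ Finset.Icc 1 (d - 1), ∏ i ∈ Finset.Icc 1 j,
          (C (i : ℤ) * X + C ((d - j : ℕ) : ℤ))).coeff (i - 1) <
        (∏ j ∈ Finset.Icc 1 (d - 1), ∏ i ∈ Finset.Icc 1 j,
          (C (i : ℤ) * X + C ((d - j : ℕ) : ℤ))).coeff i := by
  intro i h1 hi
  rw [prod_triangle d fun a b => (C (a : ℤ) * X + C (b : ℤ))]
  have h := strictPalindromic_prod _ (triangle d) (card_triangle (by omega))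
    (fun p hp => ⟨(mem_triangle.1 hp).1, (mem_triangle.1 hp).2.1⟩) (fun p hp => by
      have := mem_triangle.1 hp
      simp only [mem_triangle, Prod.fst_swap, Prod.snd_swap]
      omega)
  have h2 := h.lt i (by positivity) (by exact_mod_cast hi)
  have e : (i : ℤ) - 1 = ((i - 1 : ℕ) : ℤ) := by omega
  rwa [e, intCoeff_natCast, intCoeff_natCast] at h2
end

section
/- Let d ≥ 3 and n be integers satisfying 2n = C(d+2, 2) + 2 (equivalently, 3n − 4 − C(d+2, 2) = n − 2). Then the coefficients of M_d satisfy α_{n−2−d} = α_{n−1−d} and α_{n−3−d} < α_{n−1−d}. (In particular d!·(α_{n−3−d} − α_{n−1−d}) is a strictly negative integer.) -/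
/-!
With `m = d(d-1)/2`, the hypothesis on `n` says `m = 2k + 1` for `k = n - 2 - d`, so the three
indices are `k`, `k + 1` and `k - 1`.  The involution `(i, j) ↦ (d - j, d - i)` of the index set
swaps the two coefficients of each linear factor, so `M_d` is palindromic
(`coeff_prod_swap`, `tri_prod_swap`) and `α_k = α_{k+1}`.  A product of linear forms with positive
coefficients has a strictly log-concave coefficient sequence (`strictLogConcave_prod`, an
elementary form of Newton's inequalities), so
`α_{k-1} α_k = α_{k-1} α_{k+1} < α_k²`, and dividing by `α_k > 0` gives `α_{k-1} < α_k`.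
-/

open Polynomial in
/-- `p` has degree `m`, all its coefficients in degrees `0, …, m` are positive, and they satisfy
the strict inequalities `pᵢ pᵢ₊₂ < pᵢ₊₁²` up to `i + 1 = m`. -/
def StrictLogConcave (p : ℤ[X]) (m : ℕ) : Prop :=
  (∀ i ≤ m, 0 < p.coeff i) ∧ (∀ i, m < i → p.coeff i = 0) ∧
    ∀ i, i + 1 ≤ m → p.coeff i * p.coeff (i + 2) < p.coeff (i + 1) ^ 2

open Polynomial in
lemma linear_mul_coeff_zero (a b : ℤ) (p : ℤ[X]) :
    ((C a * X + C b) * p).coeff 0 = b * p.coeff 0 := by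
  simp [add_mul, mul_assoc]

open Polynomial in
lemma linear_mul_coeff_succ (a b : ℤ) (p : ℤ[X]) (i : ℕ) :
    ((C a * X + C b) * p).coeff (i + 1) = a * p.coeff i + b * p.coeff (i + 1) := by
  simp [add_mul, mul_assoc]

open Polynomial in
lemma StrictLogConcave.linear_mul {p : ℤ[X]} {m : ℕ} (h : StrictLogConcave p m) {a b : ℤ}
    (ha : 0 < a) (hb : 0 < b) : StrictLogConcave ((C a * X + C b) * p) (m + 1) := by
  obtain ⟨hpos, hzero, hlc⟩ := h
  have hnn : ∀ i, 0 ≤ p.coeff i := fun i => by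
    rcases le_or_gt i m with hi | hi
    · exact (hpos i hi).le
    · exact (hzero i hi).ge
  have hweak : ∀ i, p.coeff i * p.coeff (i + 2) ≤ p.coeff (i + 1) ^ 2 := fun i => by
    rcases le_or_gt (i + 1) m with hi | hi
    · exact (hlc i hi).le
    · rw [hzero (i + 2) (by omega), mul_zero]
      positivity
  -- The inequality needed for the cross term in `a * b`.
  have hcross : ∀ i, p.coeff i * p.coeff (i + 3) ≤ p.coeff (i + 1) * p.coeff (i + 2) := fun i => by
    rcases le_or_gt (i + 3) m with hi | hi
    · have h1 := hpos (i + 1) (by omega)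
      have h2 := hpos (i + 2) (by omega)
      have hmul := mul_le_mul (hweak i) (hweak (i + 1))
        (mul_nonneg (hnn _) (hnn _)) (sq_nonneg _)
      simp only [add_assoc, Nat.reduceAdd] at hmul
      refine le_of_mul_le_mul_left ?_ (mul_pos h1 h2)
      linarith
    · rw [hzero (i + 3) hi, mul_zero]
      exact mul_nonneg (hnn _) (hnn _)
  refine ⟨fun i hi => ?_, fun i hi => ?_, fun i hi => ?_⟩
  · rcases i with _ | i
    · rw [linear_mul_coeff_zero]
      exact mul_pos hb (hpos 0 (Nat.zero_le _))
    · rw [linear_mul_coeff_succ]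
      have h1 := mul_pos ha (hpos i (by omega))
      have h2 := mul_nonneg hb.le (hnn (i + 1))
      linarith
  · obtain ⟨i, rfl⟩ : ∃ k, i = k + 1 := ⟨i - 1, by omega⟩
    rw [linear_mul_coeff_succ, hzero i (by omega), hzero (i + 1) (by omega)]
    simp
  · rcases i with _ | i
    · rw [linear_mul_coeff_zero, linear_mul_coeff_succ, linear_mul_coeff_succ]
      have h0 := hpos 0 (Nat.zero_le _)
      have h1 : 0 < (a * p.coeff 0) ^ 2 := by positivity
      have h2 := mul_nonneg (mul_pos ha hb).le (mul_nonneg h0.le (hnn 1))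
      have h3 := mul_nonneg (sq_nonneg b) (sub_nonneg.2 (hweak 0))
      simp only [zero_add, Nat.reduceAdd] at h3 ⊢
      linarith
    · rw [linear_mul_coeff_succ, linear_mul_coeff_succ, linear_mul_coeff_succ]
      have h1 := mul_pos (pow_pos ha 2) (sub_pos.2 (hlc i (by omega)))
      have h2 := mul_nonneg (mul_pos ha hb).le (sub_nonneg.2 (hcross i))
      have h3 := mul_nonneg (sq_nonneg b) (sub_nonneg.2 (hweak (i + 1)))
      simp only [add_assoc, Nat.reduceAdd] at h1 h2 h3 ⊢
      linarith

open Polynomial in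
lemma strictLogConcave_prod {ι : Type*} (s : Finset ι) (a b : ι → ℤ)
    (ha : ∀ x ∈ s, 0 < a x) (hb : ∀ x ∈ s, 0 < b x) :
    StrictLogConcave (∏ x ∈ s, (C (a x) * X + C (b x))) s.card := by
  classical
  induction s using Finset.induction_on with
  | empty =>
    refine ⟨fun i hi => ?_, fun i hi => ?_, fun i hi => ?_⟩
    · obtain rfl : i = 0 := by simpa using hi
      simp
    · have : i ≠ 0 := by
        rintro rfl
        simp at hi
      simp [coeff_one, this]
    · simp at hi
  | insert x s hx ih =>
    rw [Finset.prod_insert hx, Finset.card_insert_of_notMem hx]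
    exact (ih (fun y hy => ha y (Finset.mem_insert_of_mem hy))
      (fun y hy => hb y (Finset.mem_insert_of_mem hy))).linear_mul
      (ha x (Finset.mem_insert_self _ _)) (hb x (Finset.mem_insert_self _ _))

open Polynomial in
/-- Exchanging the two coefficients of every linear factor reverses the coefficient sequence. -/
lemma coeff_prod_swap {ι : Type*} (s : Finset ι) (a b : ι → ℤ)
    (ha : ∀ x ∈ s, 0 < a x) (hb : ∀ x ∈ s, 0 < b x) (i j : ℕ) (hij : i + j = s.card) :
    (∏ x ∈ s, (C (a x) * X + C (b x))).coeff i = (∏ x ∈ s, (C (b x) * X + C (a x))).coeff j := by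
  classical
  induction s using Finset.induction_on generalizing i j with
  | empty =>
    obtain ⟨rfl, rfl⟩ : i = 0 ∧ j = 0 := by simpa using hij
    simp
  | insert x s hx ih =>
    have ha' : ∀ y ∈ s, 0 < a y := fun y hy => ha y (Finset.mem_insert_of_mem hy)
    have hb' : ∀ y ∈ s, 0 < b y := fun y hy => hb y (Finset.mem_insert_of_mem hy)
    have ih' := ih ha' hb'
    rw [Finset.card_insert_of_notMem hx] at hij
    rw [Finset.prod_insert hx, Finset.prod_insert hx]
    rcases i with _ | i
    · obtain rfl : j = s.card + 1 := by omega
      rw [linear_mul_coeff_zero, linear_mul_coeff_succ, ih' 0 s.card (by omega),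
        (strictLogConcave_prod s b a hb' ha').2.1 (s.card + 1) (by omega)]
      ring
    · rcases j with _ | j
      · obtain rfl : i = s.card := by omega
        rw [linear_mul_coeff_zero, linear_mul_coeff_succ, ih' s.card 0 (by omega),
          (strictLogConcave_prod s a b ha' hb').2.1 (s.card + 1) (by omega)]
        ring
      · rw [linear_mul_coeff_succ, linear_mul_coeff_succ, ih' i (j + 1) (by omega),
          ih' (i + 1) j (by omega)]
        ring

/-- The pairs `⟨j, i⟩` with `1 ≤ i ≤ j ≤ d - 1`, which index the linear factors of `M_d`. -/
def tri (d : ℕ) : Finset (Σ _ : ℕ, ℕ) :=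
  (Finset.Icc 1 (d - 1)).sigma fun j => Finset.Icc 1 j

lemma mem_tri {d : ℕ} {x : Σ _ : ℕ, ℕ} :
    x ∈ tri d ↔ (1 ≤ x.1 ∧ x.1 ≤ d - 1) ∧ 1 ≤ x.2 ∧ x.2 ≤ x.1 := by
  simp [tri]

lemma two_mul_card_tri (d : ℕ) : 2 * (tri d).card = d * (d - 1) := by
  rw [← Finset.sum_range_id_mul_two, mul_comm]
  congr 1
  rw [tri, Finset.card_sigma]
  simp only [Nat.card_Icc, Nat.add_sub_cancel]
  refine Finset.sum_subset (fun j hj => ?_) (fun j hj hj' => ?_)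
  · simp only [Finset.mem_Icc, Finset.mem_range] at *
    omega
  · simp only [Finset.mem_Icc, Finset.mem_range] at *
    omega

open Polynomial in
lemma tri_prod_swap (d : ℕ) :
    ∏ x ∈ tri d, (C (x.2 : ℤ) * X + C ((d - x.1 : ℕ) : ℤ)) =
      ∏ x ∈ tri d, (C ((d - x.1 : ℕ) : ℤ) * X + C (x.2 : ℤ)) := by
  refine Finset.prod_nbij' (fun x => ⟨d - x.2, d - x.1⟩) (fun x => ⟨d - x.2, d - x.1⟩)
    ?_ ?_ ?_ ?_ ?_
  · intro x hx
    rw [mem_tri] at *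
    dsimp only
    omega
  · intro x hx
    rw [mem_tri] at *
    dsimp only
    omega
  · rintro ⟨j, i⟩ hx
    rw [mem_tri] at hx
    dsimp only at *
    rw [show d - (d - j) = j by omega, show d - (d - i) = i by omega]
  · rintro ⟨j, i⟩ hx
    rw [mem_tri] at hx
    dsimp only at *
    rw [show d - (d - j) = j by omega, show d - (d - i) = i by omega]
  · rintro ⟨j, i⟩ hx
    rw [mem_tri] at hx
    dsimp only at *
    rw [show d - (d - i) = i by omega]

open Polynomial in
/-- Let `d ≥ 3` and `n` satisfy `2n = C(d+2, 2) + 2`. Writing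
`M_d(x, y) = ∏_{1 ≤ i ≤ j ≤ d−1} (i·x + (d−j)·y) = Σᵢ αᵢ xⁱ y^{m−i}` with `m = d(d−1)/2`
(homogeneous, so the `αᵢ` are the coefficients of `∏_{1 ≤ i ≤ j ≤ d−1} (i·X + (d−j))`),
we have `α_{n−2−d} = α_{n−1−d}` and `α_{n−3−d} < α_{n−1−d}`; in particular
`d!·(α_{n−3−d} − α_{n−1−d})` is a strictly negative integer. -/
theorem stmt7 (d n : ℕ) (hd : 3 ≤ d) (hn : 2 * n = (d + 2).choose 2 + 2) :
    (∏ j ∈ Finset.Icc 1 (d - 1), ∏ i ∈ Finset.Icc 1 j,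
        (C (i : ℤ) * X + C ((d - j : ℕ) : ℤ))).coeff (n - 2 - d) =
      (∏ j ∈ Finset.Icc 1 (d - 1), ∏ i ∈ Finset.Icc 1 j,
        (C (i : ℤ) * X + C ((d - j : ℕ) : ℤ))).coeff (n - 1 - d) ∧
    (∏ j ∈ Finset.Icc 1 (d - 1), ∏ i ∈ Finset.Icc 1 j,
        (C (i : ℤ) * X + C ((d - j : ℕ) : ℤ))).coeff (n - 3 - d) <
      (∏ j ∈ Finset.Icc 1 (d - 1), ∏ i ∈ Finset.Icc 1 j,
        (C (i : ℤ) * X + C ((d - j : ℕ) : ℤ))).coeff (n - 1 - d) ∧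
    (d.factorial : ℤ) *
        ((∏ j ∈ Finset.Icc 1 (d - 1), ∏ i ∈ Finset.Icc 1 j,
            (C (i : ℤ) * X + C ((d - j : ℕ) : ℤ))).coeff (n - 3 - d) -
          (∏ j ∈ Finset.Icc 1 (d - 1), ∏ i ∈ Finset.Icc 1 j,
            (C (i : ℤ) * X + C ((d - j : ℕ) : ℤ))).coeff (n - 1 - d)) < 0 := by
  have hprod : (∏ j ∈ Finset.Icc 1 (d - 1), ∏ i ∈ Finset.Icc 1 j,
      (C (i : ℤ) * X + C ((d - j : ℕ) : ℤ))) =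
      ∏ x ∈ tri d, (C (x.2 : ℤ) * X + C ((d - x.1 : ℕ) : ℤ)) := by
    rw [tri, Finset.prod_sigma]
  rw [hprod]
  have ha : ∀ x ∈ tri d, (0 : ℤ) < (x.2 : ℤ) := fun x hx => by
    rw [mem_tri] at hx
    omega
  have hb : ∀ x ∈ tri d, (0 : ℤ) < ((d - x.1 : ℕ) : ℤ) := fun x hx => by
    rw [mem_tri] at hx
    omega
  -- `m = 2k + 1` with `k = l + 1` and `n = k + 2 + d`.
  obtain ⟨l, hl, hcard⟩ : ∃ l, n = l + 3 + d ∧ (tri d).card = 2 * l + 3 := by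
    have h1 := two_mul_card_tri d
    have h2 : 2 * (d + 2).choose 2 = (d + 2) * (d + 1) := by
      rw [Nat.choose_two_right]
      exact Nat.mul_div_cancel' (Nat.even_mul_pred_self (d + 2)).two_dvd
    obtain ⟨e, rfl⟩ : ∃ e, d = e + 3 := ⟨d - 3, by omega⟩
    simp only [Nat.add_succ_sub_one] at h1
    have h3 : (e + 3 + 2) * (e + 3 + 1) = (e + 3) * (e + 2) + 4 * e + 14 := by ring
    have h4 : (e + 3) * (e + 2) = e * e + 5 * e + 6 := by ring
    exact ⟨n - 3 - (e + 3), by omega, by omega⟩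
  have e1 : n - 2 - d = l + 1 := by omega
  have e2 : n - 1 - d = l + 2 := by omega
  have e3 : n - 3 - d = l := by omega
  rw [e1, e2, e3]
  have hsymm := coeff_prod_swap (tri d) _ _ ha hb (l + 1) (l + 2) (by omega)
  rw [← tri_prod_swap] at hsymm
  obtain ⟨hpos, -, hlc⟩ := strictLogConcave_prod (tri d) _ _ ha hb
  have h1 := hlc l (by omega)
  have h2 := hpos (l + 2) (by omega)
  rw [hsymm, sq] at h1
  have hlt := lt_of_mul_lt_mul_right h1 h2.le
  exact ⟨hsymm, hlt, mul_neg_of_pos_of_neg (by positivity) (sub_neg.2 hlt)⟩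
end
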